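/- arXiv:1506.02223 — 7 statements merged into one kernel-verified Lean document; each statement's English description precedes it below -/
import Mathlib

section
/- Let m ≥ 1, let f : ℝ → ℝ and g : ℝ → ℝ satisfy f(g(s)) = s on an interval J, let ε : ℝ² → ℝ (a function of (x,y) only) and δ : ℝ^{2+m} → ℝ^m. Define the toy model map F(x,y,z) = (f(x) − ε(x,y), x, δ(x,y,z)) and H(x,y,z) = (f(x) − ε(x,y), y, z − δ(y, g(y), 0)), and the two-dimensional maps F₂(x,y) = (f(x) − ε(x,y), x) and H₂(x,y) = (f(x) − ε(x,y), y). Let G(x,y,z) = (φ(x,y,z), y, z + δ(y, g(y), 0)) satisfy H(G(w)) = w for all w ∈ U, and suppose that for each y the map s ↦ f(s) − ε(s,y) is injective on the set {φ(x,y,z) : (x,y,z) ∈ U}. Then: (i) φ(x,y,z) depends only on (x,y), i.e. there is φ₂ with φ(x,y,z) = φ₂(x,y) on U; (ii) setting G₂(x,y) = (φ₂(x,y), y), one has H₂(G₂(x,y)) = (x,y) and π_{xy}(H(F(F(G(x,y,z))))) = H₂(F₂(F₂(G₂(x,y)))) for all (x,y,z) ∈ U. In particular the first coordinate of H∘F²∘G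 is independent of z, so the pre-renormalization of a toy model map is again a toy model map and its (x,y)-projection is the two-dimensional pre-renormalization. -/
/-!
For `w = (x, y, z)` in `U`, the first coordinate of `H (G w) = w` reads `f (φ w) - ε (φ w, y) = x`,
an equation for `φ w` whose data are `x` and `y` alone. Injectivity of `s ↦ f s - ε (s, y)` makes
its solution unique, so `φ w` cannot depend on `z`. Since `ε` ignores `z`, the maps `F` and `H` are
semiconjugate to `F₂` and `H₂` under the projection to the first two coordinates, and the remaining
identities are the images of `H ∘ G = id` and `H ∘ F² ∘ G` under this projection.
-/

open Function Set

/-- The projection `π_{xy}` forgetting the fibre coordinate `z`, with `(x, y, z)` encoded as an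
element of `X × Y × Z`. -/
def projXY {X Y Z : Type*} (w : X × Y × Z) : X × Y := (w.1, w.2.1)

theorem exists_eq_of_apply_eq_of_injOn {W X Y D : Type*} [Nonempty X]
    {a : X → Y → D} {φ : W → X} {d : W → D} {y : W → Y} {U : Set W}
    (hφ : ∀ w ∈ U, a (φ w) (y w) = d w)
    (hinj : ∀ t, InjOn (fun s => a s t) (φ '' {w ∈ U | y w = t})) :
    ∃ φ₂ : D × Y → X, ∀ w ∈ U, φ w = φ₂ (d w, y w) := by
  refine ⟨fun p => invFunOn (fun s => a s p.2) (φ '' {w ∈ U | y w = p.2}) p.1, fun w hw => ?_⟩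
  have hmem : φ w ∈ φ '' {w' ∈ U | y w' = y w} := mem_image_of_mem φ ⟨hw, rfl⟩
  simpa only [hφ w hw] using ((hinj (y w)).leftInvOn_invFunOn hmem).symm

theorem stmt_2_general {X Y Z : Type*} [Nonempty X]
    {F H G : X × Y × Z → X × Y × Z} {F₂ H₂ : X × Y → X × Y}
    {φ : X × Y × Z → X} {U : Set (X × Y × Z)}
    (hF : Semiconj projXY F F₂) (hH : Semiconj projXY H H₂)
    (hG : ∀ w ∈ U, projXY (G w) = (φ w, w.2.1))
    (hHG : ∀ w ∈ U, projXY (H (G w)) = projXY w)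
    (hinj : ∀ y, InjOn (fun s => (H₂ (s, y)).1) (φ '' {w ∈ U | w.2.1 = y})) :
    ∃ φ₂ : X × Y → X,
      (∀ w ∈ U, φ w = φ₂ (projXY w)) ∧
      (∀ w ∈ U,
        H₂ (φ₂ (projXY w), w.2.1) = projXY w ∧
        projXY (H (F (F (G w)))) = H₂ (F₂ (F₂ (φ₂ (projXY w), w.2.1)))) := by
  have hH₂ : ∀ w ∈ U, H₂ (φ w, w.2.1) = projXY w := fun w hw => by
    rw [← hG w hw, ← hH.eq, hHG w hw]
  obtain ⟨φ₂, hφ₂⟩ : ∃ φ₂ : X × Y → X, ∀ w ∈ U, φ w = φ₂ (projXY w) :=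
    exists_eq_of_apply_eq_of_injOn (a := fun s y => (H₂ (s, y)).1)
      (fun w hw => congrArg Prod.fst (hH₂ w hw)) hinj
  refine ⟨φ₂, hφ₂, fun w hw => ?_⟩
  rw [← hφ₂ w hw]
  exact ⟨hH₂ w hw, by rw [hH.eq, hF.eq, hF.eq, hG w hw]⟩

/-- the pre-renormalization of a toy model map is again a toy model
map, and its `(x,y)`-projection is the two-dimensional pre-renormalization. -/
theorem stmt_2 (m : ℕ) (hm : 1 ≤ m)
    (f g : ℝ → ℝ) (J : Set ℝ) (hfg : ∀ s ∈ J, f (g s) = s)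
    (ε : ℝ × ℝ → ℝ)
    (δ : ℝ × ℝ × (Fin m → ℝ) → (Fin m → ℝ))
    (F H : ℝ × ℝ × (Fin m → ℝ) → ℝ × ℝ × (Fin m → ℝ))
    (F₂ H₂ : ℝ × ℝ → ℝ × ℝ)
    (G : ℝ × ℝ × (Fin m → ℝ) → ℝ × ℝ × (Fin m → ℝ))
    (φ : ℝ × ℝ × (Fin m → ℝ) → ℝ)
    (U : Set (ℝ × ℝ × (Fin m → ℝ)))
    (hF : ∀ w, F w = (f w.1 - ε (w.1, w.2.1), w.1, δ w))
    (hH : ∀ w, H w = (f w.1 - ε (w.1, w.2.1), w.2.1, w.2.2 - δ (w.2.1, g w.2.1, 0)))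
    (hF₂ : ∀ p : ℝ × ℝ, F₂ p = (f p.1 - ε p, p.1))
    (hH₂ : ∀ p : ℝ × ℝ, H₂ p = (f p.1 - ε p, p.2))
    (hG : ∀ w ∈ U, G w = (φ w, w.2.1, w.2.2 + δ (w.2.1, g w.2.1, 0)))
    (hHG : ∀ w ∈ U, H (G w) = w)
    (hinj : ∀ y : ℝ, Set.InjOn (fun s => f s - ε (s, y)) (φ '' U)) :
    ∃ φ₂ : ℝ × ℝ → ℝ,
      (∀ w ∈ U, φ w = φ₂ (w.1, w.2.1)) ∧
      (∀ w ∈ U,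
        H₂ (φ₂ (w.1, w.2.1), w.2.1) = (w.1, w.2.1) ∧
        ((H (F (F (G w)))).1, (H (F (F (G w)))).2.1) =
          H₂ (F₂ (F₂ (φ₂ (w.1, w.2.1), w.2.1)))) := by
  have hF_semiconj : Semiconj projXY F F₂ := fun w => by simp only [projXY, hF, hF₂]
  have hH_semiconj : Semiconj projXY H H₂ := fun w => by simp only [projXY, hH, hH₂]
  exact stmt_2_general hF_semiconj hH_semiconj
    (fun w hw => by simp only [projXY, hG w hw]) (fun w hw => by rw [hHG w hw])
    (fun y => by simpa only [hH₂] using (hinj y).mono (image_mono (sep_subset U _)))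
end

section
/- Let m ≥ 1, let A be an invertible 2×2 real matrix, D an invertible m×m real matrix, B a 2×m and C an m×2 real matrix, and let ρ₀ ∈ (0,1). Suppose ‖A^{−1} B D^{−1} C‖ ≤ ρ₀ and ‖B‖·‖C‖ ≤ ρ₀ · m(A) · m(D), where m(A) = 1/‖A^{−1}‖ and m(D) = 1/‖D^{−1}‖. Then A − B D^{−1} C is invertible and ‖(A − B D^{−1} C)^{−1} B D^{−1}‖ · ‖C‖ ≤ ρ₀/(1 − ρ₀). -/
/-!
Put `X = A⁻¹ B D⁻¹ C`. Since `‖X‖ < 1`, the Neumann series inverts `1 - X`, hence also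
`A - B D⁻¹ C = A (1 - X)`. The operator `R = (A - B D⁻¹ C)⁻¹ B D⁻¹` satisfies
`R = A⁻¹ B D⁻¹ + X R`, so `(1 - ‖X‖) ‖R‖ ≤ ‖A⁻¹ B D⁻¹‖`; the bound on `‖B‖ ‖C‖` says that
`‖A⁻¹‖ ‖B‖ ‖D⁻¹‖ ‖C‖ ≤ ρ₀`.
-/

noncomputable section

/-- `ℝ²` with the Euclidean norm. -/
abbrev E2 := EuclideanSpace ℝ (Fin 2)

/-- `ℝᵐ` with the Euclidean norm. -/
abbrev Em (m : ℕ) := EuclideanSpace ℝ (Fin m)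

section SchurComplement

open ContinuousLinearMap

variable {𝕜 E E' F F' : Type*} [NontriviallyNormedField 𝕜]
  [SeminormedAddCommGroup E'] [NormedSpace 𝕜 E'] [SeminormedAddCommGroup F] [NormedSpace 𝕜 F]
  [SeminormedAddCommGroup F'] [NormedSpace 𝕜 F']

section Bounds

variable [SeminormedAddCommGroup E] [NormedSpace 𝕜 E]

lemma opNorm_le_opNorm_sub_comp_div {X : E →L[𝕜] E} (hX : ‖X‖ < 1) (T : F →L[𝕜] E) :
    ‖T‖ ≤ ‖T - X ∘L T‖ / (1 - ‖X‖) := by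
  rw [le_div_iff₀ (sub_pos.2 hX)]
  have triangle : ‖T‖ - ‖X ∘L T‖ ≤ ‖T - X ∘L T‖ := norm_sub_norm_le T (X ∘L T)
  have submul : ‖X ∘L T‖ ≤ ‖X‖ * ‖T‖ := opNorm_comp_le X T
  linarith

lemma opNorm_inverse_sub_comp_le (A : E ≃L[𝕜] E') {S : E →L[𝕜] E'}
    (hS : ‖(A.symm : E' →L[𝕜] E) ∘L S‖ < 1) (hAS : ((A : E →L[𝕜] E') - S).IsInvertible)
    (T : F →L[𝕜] E') :
    ‖((A : E →L[𝕜] E') - S).inverse ∘L T‖ ≤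
      ‖(A.symm : E' →L[𝕜] E) ∘L T‖ / (1 - ‖(A.symm : E' →L[𝕜] E) ∘L S‖) := by
  set R := ((A : E →L[𝕜] E') - S).inverse ∘L T
  have solves : (A : E →L[𝕜] E') ∘L R - S ∘L R = T := by
    rw [← sub_comp, ← comp_assoc, hAS.self_comp_inverse, id_comp]
  have fixed_point : R - ((A.symm : E' →L[𝕜] E) ∘L S) ∘L R = (A.symm : E' →L[𝕜] E) ∘L T := by
    rw [← solves, comp_sub, ← comp_assoc _ _ R, ← comp_assoc _ _ R, A.coe_symm_comp_coe, id_comp]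
  rw [← fixed_point]
  exact opNorm_le_opNorm_sub_comp_div hS R

lemma opNorm_comp_comp_mul_le {P : E' →L[𝕜] E} {B : F →L[𝕜] E'} {Q : F' →L[𝕜] F} {c ρ : ℝ}
    (hρ : 0 ≤ ρ) (hc : 0 ≤ c) (h : ‖B‖ * c ≤ ρ * ‖P‖⁻¹ * ‖Q‖⁻¹) :
    ‖P ∘L (B ∘L Q)‖ * c ≤ ρ :=
  calc ‖P ∘L (B ∘L Q)‖ * c
      ≤ ‖P‖ * (‖B‖ * ‖Q‖) * c := by grw [opNorm_comp_le, opNorm_comp_le]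
    _ = ‖P‖ * ‖Q‖ * (‖B‖ * c) := by ring
    _ ≤ ‖P‖ * ‖Q‖ * (ρ * ‖P‖⁻¹ * ‖Q‖⁻¹) := by gcongr
    _ = ρ * (‖P‖ * ‖P‖⁻¹) * (‖Q‖ * ‖Q‖⁻¹) := by ring
    _ ≤ ρ * 1 * 1 := by gcongr <;> exact mul_inv_le_one
    _ = ρ := by ring

end Bounds

variable [NormedAddCommGroup E] [NormedSpace 𝕜 E] [CompleteSpace E]

lemma isInvertible_sub_of_opNorm_symm_comp_lt_one (A : E ≃L[𝕜] E') {S : E →L[𝕜] E'}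
    (hS : ‖(A.symm : E' →L[𝕜] E) ∘L S‖ < 1) : ((A : E →L[𝕜] E') - S).IsInvertible := by
  obtain ⟨u, hu⟩ := isUnit_one_sub_of_norm_lt_one hS
  have factor : (A : E →L[𝕜] E') - S =
      (A : E →L[𝕜] E') ∘L (1 - (A.symm : E' →L[𝕜] E) ∘L S) := by
    rw [comp_sub, ← comp_assoc, A.coe_comp_coe_symm, id_comp, one_def, comp_id]
  rw [factor, isInvertible_equiv_comp, ← hu]
  exact ⟨.ofUnit u, rfl⟩

theorem stmt_9_general {ρ₀ : ℝ} (hρ₀ : ρ₀ < 1) (A : E ≃L[𝕜] E') (D : F ≃L[𝕜] F')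
    (B : F →L[𝕜] E') (C : E →L[𝕜] F')
    (hX : ‖(A.symm : E' →L[𝕜] E) ∘L (B ∘L ((D.symm : F' →L[𝕜] F) ∘L C))‖ ≤ ρ₀)
    (hBC : ‖B‖ * ‖C‖ ≤ ρ₀ * ‖(A.symm : E' →L[𝕜] E)‖⁻¹ * ‖(D.symm : F' →L[𝕜] F)‖⁻¹) :
    ((A : E →L[𝕜] E') - B ∘L ((D.symm : F' →L[𝕜] F) ∘L C)).IsInvertible ∧
      ‖((A : E →L[𝕜] E') - B ∘L ((D.symm : F' →L[𝕜] F) ∘L C)).inverse ∘L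
        (B ∘L (D.symm : F' →L[𝕜] F))‖ * ‖C‖ ≤ ρ₀ / (1 - ρ₀) := by
  set d := (D.symm : F' →L[𝕜] F)
  set a := (A.symm : E' →L[𝕜] E)
  have hX_lt : ‖a ∘L (B ∘L (d ∘L C))‖ < 1 := hX.trans_lt hρ₀
  have hρ₀_nonneg : 0 ≤ ρ₀ := (norm_nonneg _).trans hX
  have invertible := isInvertible_sub_of_opNorm_symm_comp_lt_one A hX_lt
  refine ⟨invertible, ?_⟩
  calc ‖((A : E →L[𝕜] E') - B ∘L (d ∘L C)).inverse ∘L (B ∘L d)‖ * ‖C‖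
      ≤ ‖a ∘L (B ∘L d)‖ / (1 - ‖a ∘L (B ∘L (d ∘L C))‖) * ‖C‖ := by
        gcongr
        exact opNorm_inverse_sub_comp_le A hX_lt invertible (B ∘L d)
    _ = ‖a ∘L (B ∘L d)‖ * ‖C‖ / (1 - ‖a ∘L (B ∘L (d ∘L C))‖) := div_mul_eq_mul_div ..
    _ ≤ ρ₀ / (1 - ρ₀) := by
        gcongr
        exact opNorm_comp_comp_mul_le hρ₀_nonneg (norm_nonneg C) hBC

end SchurComplement

/-- if `‖A⁻¹ B D⁻¹ C‖ ≤ ρ₀ < 1` and `‖B‖‖C‖ ≤ ρ₀ m(A) m(D)`, then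
the Schur complement `A - B D⁻¹ C` is invertible and
`‖(A - B D⁻¹ C)⁻¹ B D⁻¹‖ ⬝ ‖C‖ ≤ ρ₀ / (1 - ρ₀)`. -/
theorem stmt_9 (m : ℕ) (hm : 1 ≤ m) (ρ₀ : ℝ) (hρ₀0 : 0 < ρ₀) (hρ₀1 : ρ₀ < 1)
    (A : E2 ≃L[ℝ] E2) (D : Em m ≃L[ℝ] Em m)
    (B : Em m →L[ℝ] E2) (C : E2 →L[ℝ] Em m)
    (h1 : ‖((A.symm : E2 →L[ℝ] E2)).comp
        (B.comp (((D.symm : Em m →L[ℝ] Em m)).comp C))‖ ≤ ρ₀)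
    (h2 : ‖B‖ * ‖C‖ ≤ ρ₀ * ‖(A.symm : E2 →L[ℝ] E2)‖⁻¹ * ‖(D.symm : Em m →L[ℝ] Em m)‖⁻¹) :
    ∃ E : E2 →L[ℝ] E2,
      ((A : E2 →L[ℝ] E2) - B.comp (((D.symm : Em m →L[ℝ] Em m)).comp C)).comp E =
        ContinuousLinearMap.id ℝ E2 ∧
      E.comp ((A : E2 →L[ℝ] E2) - B.comp (((D.symm : Em m →L[ℝ] Em m)).comp C)) =
        ContinuousLinearMap.id ℝ E2 ∧
      ‖E.comp (B.comp ((D.symm : Em m →L[ℝ] Em m)))‖ * ‖C‖ ≤ ρ₀ / (1 - ρ₀) := by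
  obtain ⟨invertible, bound⟩ := stmt_9_general hρ₀1 A D B C h1 h2
  exact ⟨_, invertible.self_comp_inverse, invertible.inverse_comp_self, bound⟩
end
end

section
/- Let m ≥ 1 and let k < n be integers. For k ≤ j ≤ n−1 let α_j, σ_j, t_j ∈ ℝ, let u_j ∈ ℝ^m (viewed as a 1×m row vector) and d_j ∈ ℝ^m (an m×1 column vector), and let D_j be the (m+2)×(m+2) real matrix with block form [[α_j, σ_j t_j, σ_j u_j],[0, σ_j, 0],[0, σ_j d_j, σ_j I_m]], where I_m is the m×m identity matrix. Then D_k D_{k+1} ⋯ D_{n−1} = [[Π_{j=k}^{n−1} α_j, T_{n,k}, U_{n,k}],[0, σ_{n,k}, 0],[0, σ_{n,k}·Σ_{j=k}^{n−1} d_j, σ_{n,k} I_m]], where σ_{n,k} = Π_{j=k}^{n−1} σ_j, U_{n,k} = Σ_{i=k}^{n−1} (Π_{j=k}^{i−1} α_j)(Π_{j=i}^{n−1} σ_j) · u_i, and T_{n,k} = Σ_{i=k}^{n−1} (Π_{j=k}^{i−1} α_j)(Π_{j=i}^{n−1} σ_j) · ( u_i·(Σ_{l=i+1}^{n−1} d_l)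 + t_i ), with u·d denoting the dot product and empty products equal to 1 and empty sums equal to 0. -/
open scoped BigOperators

/-!
The blocks `D_j` and all their products lie in one family of block triangular maps, closed under
composition: the scale factors multiply, the vectors `d` add, and the first row `(a, τ, U)` of the
left factor picks up the columns of the right factor. Hence `D_k ⋯ D_{n-1}` is found by descending
induction on `k`, and its entries `T` and `U` both solve the recursion
`S k = (∏_{j=k}^{n-1} σ_j) X_k + α_k S (k+1)`, `S n = 0`, with `X = u` for `U` and with
`X_i = u_i (∑_{l>i} d_l) + t_i` for `T`.
-/

section TransferSum

variable {R N : Type*} [CommSemiring R] [AddCommMonoid N] [Module R N]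

/-- The sum `∑_{k ≤ i < n} (∏_{k ≤ j < i} α_j) (∏_{i ≤ j < n} σ_j) X_i`, the common shape of the
entries `T_{n,k}` (with `N = R`) and `U_{n,k}` (with `N` the space of row vectors). -/
def transferSum (α σ : ℕ → R) (X : ℕ → N) (k n : ℕ) : N :=
  ∑ i ∈ Finset.Ico k n, ((∏ j ∈ Finset.Ico k i, α j) * ∏ j ∈ Finset.Ico i n, σ j) • X i

lemma transferSum_self (α σ : ℕ → R) (X : ℕ → N) (n : ℕ) : transferSum α σ X n n = 0 := by
  simp [transferSum]

lemma transferSum_eq_add_smul_succ (α σ : ℕ → R) (X : ℕ → N) {k n : ℕ} (hkn : k < n) :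
    transferSum α σ X k n =
      (∏ j ∈ Finset.Ico k n, σ j) • X k + α k • transferSum α σ X (k + 1) n := by
  simp only [transferSum]
  rw [Finset.sum_eq_sum_Ico_succ_bot hkn, Finset.smul_sum, Finset.Ico_self, Finset.prod_empty,
    one_mul]
  congr 1
  refine Finset.sum_congr rfl fun i hi => ?_
  rw [Finset.prod_eq_prod_Ico_succ_bot (Finset.mem_Ico.mp hi).1, mul_assoc, mul_smul]

end TransferSum

section BlockMap

variable {R M : Type*} [CommSemiring R] [AddCommMonoid M] [Module R M]

/-- The action of the block matrix `[[a, τ, U], [0, s, 0], [0, s d, s I]]` on `R × R × M`. The row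
vector `U` is encoded as a linear form on `M`. -/
def blockMap (a s τ : R) (U : Module.Dual R M) (d : M) (w : R × R × M) : R × R × M :=
  (a * w.1 + τ * w.2.1 + U w.2.2, s * w.2.1, s • (w.2.1 • d + w.2.2))

lemma blockMap_eq_id : blockMap (1 : R) 1 0 0 (0 : M) = id := by
  ext w <;> simp [blockMap]

lemma blockMap_comp_blockMap (a s τ a' s' τ' : R) (U U' : Module.Dual R M) (d d' : M) :
    blockMap a s τ U d ∘ blockMap a' s' τ' U' d' =
      blockMap (a * a') (s * s') (s' * (τ + U d') + a * τ') (s' • U + a • U') (d + d') := by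
  funext w
  refine Prod.ext ?_ (Prod.ext ?_ ?_)
  · simp only [blockMap, Function.comp_apply, map_smul, map_add, LinearMap.add_apply,
      LinearMap.smul_apply, smul_eq_mul]
    ring
  · simp only [blockMap, Function.comp_apply, mul_assoc]
  · simp only [blockMap, Function.comp_apply]
    module

theorem stmt_10_general {k n : ℕ} (hkn : k ≤ n) (α σ t : ℕ → R) (u : ℕ → Module.Dual R M)
    (d : ℕ → M) (Φ : ℕ → R × R × M → R × R × M) (hΦn : Φ n = id)
    (hΦ : ∀ j, k ≤ j → j < n →
      Φ j = blockMap (α j) (σ j) (σ j * t j) (σ j • u j) (d j) ∘ Φ (j + 1)) :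
    Φ k = blockMap (∏ j ∈ Finset.Ico k n, α j) (∏ j ∈ Finset.Ico k n, σ j)
      (transferSum α σ (fun i => u i (∑ l ∈ Finset.Ico (i + 1) n, d l) + t i) k n)
      (transferSum α σ u k n) (∑ j ∈ Finset.Ico k n, d j) := by
  induction hkn using Nat.decreasingInduction with
  | self => simp [hΦn, transferSum_self, blockMap_eq_id]
  | of_succ k hkn ih =>
    have hk : k < n := hkn
    rw [hΦ k le_rfl hk, ih fun j hj => hΦ j (Nat.le_of_succ_le hj), blockMap_comp_blockMap]
    simp only [transferSum_eq_add_smul_succ α σ _ hk, Finset.prod_eq_prod_Ico_succ_bot hk,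
      Finset.sum_eq_sum_Ico_succ_bot hk, LinearMap.smul_apply, smul_eq_mul]
    congr 1
    · ring
    · module

end BlockMap

/-- exact block decomposition of the product
`D_k D_{k+1} ⋯ D_{n-1}` of the derivatives of the nonlinear scaling maps at the
tip. -/
theorem stmt_10 (m : ℕ) (hm : 1 ≤ m) (k n : ℕ) (hkn : k < n)
    (α σ t : ℕ → ℝ) (u d : ℕ → Fin m → ℝ)
    (Φ : ℕ → (ℝ × ℝ × (Fin m → ℝ)) → (ℝ × ℝ × (Fin m → ℝ)))
    (hΦn : Φ n = id)
    (hΦ : ∀ j, k ≤ j → j < n → ∀ w,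
      Φ j w =
        (α j * (Φ (j + 1) w).1 + σ j * t j * (Φ (j + 1) w).2.1 +
            σ j * ∑ r : Fin m, u j r * (Φ (j + 1) w).2.2 r,
          σ j * (Φ (j + 1) w).2.1,
          fun r => σ j * ((Φ (j + 1) w).2.1 * d j r + (Φ (j + 1) w).2.2 r))) :
    ∀ w : ℝ × ℝ × (Fin m → ℝ),
      Φ k w =
        ((∏ j ∈ Finset.Ico k n, α j) * w.1 +
            (∑ i ∈ Finset.Ico k n,
              (∏ j ∈ Finset.Ico k i, α j) * (∏ j ∈ Finset.Ico i n, σ j) *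
                ((∑ r : Fin m, u i r * ∑ l ∈ Finset.Ico (i + 1) n, d l r) + t i)) * w.2.1 +
            ∑ i ∈ Finset.Ico k n,
              (∏ j ∈ Finset.Ico k i, α j) * (∏ j ∈ Finset.Ico i n, σ j) *
                ∑ r : Fin m, u i r * w.2.2 r,
          (∏ j ∈ Finset.Ico k n, σ j) * w.2.1,
          fun r => (∏ j ∈ Finset.Ico k n, σ j) *
            ((∑ j ∈ Finset.Ico k n, d j r) * w.2.1 + w.2.2 r)) := by
  intro w
  rw [stmt_10_general hkn.le α σ t (fun j => dotProductBilin ℝ ℝ (u j)) d Φ hΦn fun j hkj hjn => ?_]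
  · ext <;> simp [blockMap, transferSum, dotProduct, mul_add, mul_comm, -map_sum]
  · ext v <;> simp [hΦ j hkj hjn v, blockMap, dotProduct, mul_add]
end

section
/- Let m ≥ 1, let 0 < ε̄ ≤ 1/2 and 0 < σ < 1, and fix k ≥ 0. Let t_j ∈ ℝ and u_j, d_j ∈ ℝ^m for j ≥ k satisfy |t_j| ≤ ε̄^{2^j}, ‖u_j‖ ≤ ε̄^{2^j} and ‖d_j‖ ≤ ε̄^{2^j}. For n > k define d_{n,k} = Σ_{j=k}^{n−1} d_j, u_{n,k} = Σ_{j=k}^{n−1} (−σ)^{j−k} u_j, and t_{n,k} = Σ_{j=k}^{n−1} (−σ)^{j−k} ( u_j · Σ_{i=j+1}^{n−1} d_i + t_j ). Then as n → ∞ these converge to limits d_{*,k}, u_{*,k}, t_{*,k}, and there is a constant C, depending only on σ, such that for all n > k: ‖d_{n,k}‖ ≤ 2 ε̄^{2^k}, ‖u_{n,k}‖ ≤ 2 ε̄^{2^k}, |t_{n,k}| ≤ C ε̄^{2^k}, and ‖d_{n,k} − d_{*,k}‖ ≤ C ε̄^{2^n}, ‖u_{n,k} − u_{*,k}‖ ≤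 C ε̄^{2^n}, |t_{n,k} − t_{*,k}| ≤ C ε̄^{2^n}; i.e., the convergence is super-exponentially fast. -/
open scoped BigOperators RealInnerProductSpace

/-!
Call `a` halving if `2 * a (j + 1) ≤ a j`; for `0 ≤ ε ≤ 1 / 2` the sequence `ε ^ 2 ^ j` is halving.
A series whose terms are dominated by a halving sequence has all its blocks starting at `n`, hence
also its tail there, bounded by `2 * a n`. This settles `d_{n,k}` and `u_{n,k}`. Interchanging the
double sum turns `t_{n,k}` into the series with terms `⟪u_{i,k}, d_i⟫ + (-σ) ^ (i - k) * t_i`; since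
`‖u_{i,k}‖ ≤ 2 * a k ≤ 1`, its terms are dominated by `2 * a i`.
-/

section HalvingMajorant

variable {E : Type*} [SeminormedAddCommGroup E] {a : ℕ → ℝ} {x : ℕ → E} {k : ℕ}

lemma pow_two_pow_le_half {ε : ℝ} (hε₀ : 0 ≤ ε) (hε : ε ≤ 1 / 2) (j : ℕ) : ε ^ 2 ^ j ≤ 1 / 2 :=
  (pow_le_of_le_one hε₀ (by linarith) (by positivity)).trans hε

lemma two_mul_pow_two_pow_succ_le {ε : ℝ} (hε₀ : 0 ≤ ε) (hε : ε ≤ 1 / 2) (j : ℕ) :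
    2 * ε ^ 2 ^ (j + 1) ≤ ε ^ 2 ^ j :=
  calc 2 * ε ^ 2 ^ (j + 1)
      = 2 * ε ^ 2 ^ j * ε ^ 2 ^ j := by rw [pow_succ 2 j, pow_mul]; ring
    _ ≤ ε ^ 2 ^ j :=
        mul_le_of_le_one_left (by positivity) (by linarith [pow_two_pow_le_half hε₀ hε j])

lemma sum_Ico_le_two_mul_sub (ha : ∀ j, 2 * a (j + 1) ≤ a j) {p q : ℕ} (hpq : p ≤ q) :
    ∑ j ∈ Finset.Ico p q, a j ≤ 2 * (a p - a q) :=
  calc ∑ j ∈ Finset.Ico p q, a j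
      ≤ ∑ j ∈ Finset.Ico p q, (-2 * a (j + 1) - -2 * a j) :=
        Finset.sum_le_sum fun j _ ↦ by linarith [ha j]
    _ = 2 * (a p - a q) := by rw [Finset.sum_Ico_sub (fun j ↦ -2 * a j) hpq]; ring

lemma sum_norm_Ico_le_two_mul (ha : ∀ j, 2 * a (j + 1) ≤ a j) (hx : ∀ j, k ≤ j → ‖x j‖ ≤ a j)
    {n : ℕ} (hn : k ≤ n) : ∑ j ∈ Finset.Ico k n, ‖x j‖ ≤ 2 * a k := by
  have ha_nonneg : 0 ≤ a n := (norm_nonneg _).trans (hx n hn)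
  calc ∑ j ∈ Finset.Ico k n, ‖x j‖
      ≤ ∑ j ∈ Finset.Ico k n, a j :=
        Finset.sum_le_sum fun j hj ↦ hx j (Finset.mem_Ico.1 hj).1
    _ ≤ 2 * (a k - a n) := sum_Ico_le_two_mul_sub ha hn
    _ ≤ 2 * a k := by linarith

lemma norm_sum_Ico_le_two_mul (ha : ∀ j, 2 * a (j + 1) ≤ a j) (hx : ∀ j, k ≤ j → ‖x j‖ ≤ a j)
    {n : ℕ} (hn : k ≤ n) : ‖∑ j ∈ Finset.Ico k n, x j‖ ≤ 2 * a k :=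
  (norm_sum_le _ _).trans (sum_norm_Ico_le_two_mul ha hx hn)

lemma exists_tendsto_sum_Ico [CompleteSpace E] (ha : ∀ j, 2 * a (j + 1) ≤ a j)
    (hx : ∀ j, k ≤ j → ‖x j‖ ≤ a j) :
    ∃ L, Filter.Tendsto (fun n ↦ ∑ j ∈ Finset.Ico k n, x j) Filter.atTop (nhds L) := by
  have hsum : Summable fun i ↦ x (k + i) := by
    refine .of_norm (summable_of_sum_range_le (c := 2 * a k) (fun _ ↦ norm_nonneg _) fun n ↦ ?_)
    simpa only [Finset.sum_Ico_eq_sum_range, Nat.add_sub_cancel_left] using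
      sum_norm_Ico_le_two_mul ha hx (Nat.le_add_right k n)
  refine ⟨∑' i, x (k + i), ?_⟩
  simpa only [Finset.sum_Ico_eq_sum_range, Function.comp_def] using
    hsum.hasSum.tendsto_sum_nat.comp (Filter.tendsto_sub_atTop_nat k)

lemma exists_norm_sum_Ico_sub_le_two_mul [CompleteSpace E] (ha : ∀ j, 2 * a (j + 1) ≤ a j)
    (hx : ∀ j, k ≤ j → ‖x j‖ ≤ a j) :
    ∃ L, ∀ n, k ≤ n → ‖∑ j ∈ Finset.Ico k n, x j - L‖ ≤ 2 * a n := by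
  obtain ⟨L, hL⟩ := exists_tendsto_sum_Ico ha hx
  refine ⟨L, fun n hn ↦ ?_⟩
  rw [norm_sub_rev]
  refine le_of_tendsto (hL.sub_const _).norm ?_
  filter_upwards [Filter.eventually_ge_atTop n] with q hq
  rw [← Finset.sum_Ico_consecutive _ hn hq, add_sub_cancel_left]
  exact norm_sum_Ico_le_two_mul ha (fun j hj ↦ hx j (hn.trans hj)) hq

end HalvingMajorant

section InnerProductSpace

variable {E : Type*} [SeminormedAddCommGroup E] [InnerProductSpace ℝ E]

lemma sum_Ico_mul_inner_sum_Ico_add (w t : ℕ → ℝ) (u d : ℕ → E) (k n : ℕ) :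
    ∑ j ∈ Finset.Ico k n, w j * (⟪u j, ∑ i ∈ Finset.Ico (j + 1) n, d i⟫ + t j) =
      ∑ i ∈ Finset.Ico k n, (⟪∑ j ∈ Finset.Ico k i, w j • u j, d i⟫ + w i * t i) := by
  simp only [mul_add, Finset.sum_add_distrib, inner_sum, sum_inner, Finset.mul_sum,
    real_inner_smul_left, Finset.sum_Ico_Ico_comm']

lemma norm_inner_sum_Ico_add_le_two_mul {a s : ℕ → ℝ} {v d : ℕ → E} {k : ℕ}
    (ha : ∀ j, 2 * a (j + 1) ≤ a j) (hak : a k ≤ 1 / 2) (hv : ∀ j, k ≤ j → ‖v j‖ ≤ a j)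
    (hd : ∀ j, k ≤ j → ‖d j‖ ≤ a j) (hs : ∀ j, k ≤ j → ‖s j‖ ≤ a j) {i : ℕ} (hi : k ≤ i) :
    ‖⟪∑ j ∈ Finset.Ico k i, v j, d i⟫ + s i‖ ≤ 2 * a i := by
  have hv_sum : ‖∑ j ∈ Finset.Ico k i, v j‖ ≤ 1 :=
    (norm_sum_Ico_le_two_mul ha hv hi).trans (by linarith)
  calc ‖⟪∑ j ∈ Finset.Ico k i, v j, d i⟫ + s i‖
      ≤ ‖∑ j ∈ Finset.Ico k i, v j‖ * ‖d i‖ + ‖s i‖ :=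
        norm_add_le_of_le (norm_inner_le_norm _ _) le_rfl
    _ ≤ 1 * a i + a i := by gcongr; exacts [hd i hi, hs i hi]
    _ = 2 * a i := by ring

end InnerProductSpace

lemma norm_smul_le_of_norm_le_one {𝕜 E : Type*} [SeminormedRing 𝕜] [SeminormedAddCommGroup E]
    [Module 𝕜 E] [IsBoundedSMul 𝕜 E] {c : 𝕜} {x : E} {r : ℝ} (hc : ‖c‖ ≤ 1) (hx : ‖x‖ ≤ r) :
    ‖c • x‖ ≤ r :=
  (norm_smul_le c x).trans ((mul_le_of_le_one_left (norm_nonneg x) hc).trans hx)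

theorem stmt_11_general {E : Type*} [SeminormedAddCommGroup E] [InnerProductSpace ℝ E]
    [CompleteSpace E] {a w t : ℕ → ℝ} {u d : ℕ → E} {k : ℕ}
    (ha : ∀ j, 2 * a (j + 1) ≤ a j) (hak : a k ≤ 1 / 2) (hw : ∀ j, k ≤ j → |w j| ≤ 1)
    (h : ∀ j, k ≤ j → |t j| ≤ a j ∧ ‖u j‖ ≤ a j ∧ ‖d j‖ ≤ a j) :
    ∃ (dstar ustar : E) (tstar : ℝ), ∀ n : ℕ, k ≤ n →
      ‖∑ j ∈ Finset.Ico k n, d j‖ ≤ 2 * a k ∧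
      ‖∑ j ∈ Finset.Ico k n, w j • u j‖ ≤ 2 * a k ∧
      |∑ j ∈ Finset.Ico k n, w j * (⟪u j, ∑ i ∈ Finset.Ico (j + 1) n, d i⟫ + t j)| ≤ 4 * a k ∧
      ‖(∑ j ∈ Finset.Ico k n, d j) - dstar‖ ≤ 4 * a n ∧
      ‖(∑ j ∈ Finset.Ico k n, w j • u j) - ustar‖ ≤ 4 * a n ∧
      |(∑ j ∈ Finset.Ico k n, w j * (⟪u j, ∑ i ∈ Finset.Ico (j + 1) n, d i⟫ + t j)) - tstar| ≤
        4 * a n := by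
  have hd j (hj : k ≤ j) : ‖d j‖ ≤ a j := (h j hj).2.2
  have hwu j (hj : k ≤ j) : ‖w j • u j‖ ≤ a j :=
    norm_smul_le_of_norm_le_one (hw j hj) (h j hj).2.1
  have hwt j (hj : k ≤ j) : ‖w j * t j‖ ≤ a j := by
    rw [← smul_eq_mul]
    exact norm_smul_le_of_norm_le_one (hw j hj) (h j hj).1
  have ha₂ j : 2 * (2 * a (j + 1)) ≤ 2 * a j := by linarith [ha j]
  have ht j (hj : k ≤ j) := norm_inner_sum_Ico_add_le_two_mul ha hak hwu hd hwt hj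
  obtain ⟨dstar, hdstar⟩ := exists_norm_sum_Ico_sub_le_two_mul ha hd
  obtain ⟨ustar, hustar⟩ := exists_norm_sum_Ico_sub_le_two_mul ha hwu
  obtain ⟨tstar, htstar⟩ := exists_norm_sum_Ico_sub_le_two_mul (a := fun j ↦ 2 * a j) ha₂ ht
  refine ⟨dstar, ustar, tstar, fun n hn ↦ ?_⟩
  have ha_nonneg : 0 ≤ a n := (norm_nonneg _).trans (hd n hn)
  have ht_le := norm_sum_Ico_le_two_mul (a := fun j ↦ 2 * a j) ha₂ ht hn
  have ht_sub_le := htstar n hn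
  rw [← sum_Ico_mul_inner_sum_Ico_add, Real.norm_eq_abs] at ht_le ht_sub_le
  exact ⟨norm_sum_Ico_le_two_mul ha hd hn, norm_sum_Ico_le_two_mul ha hwu hn, by linarith,
    by linarith [hdstar n hn], by linarith [hustar n hn], by linarith⟩

/-- the normalized entries `d_{n,k}`, `u_{n,k}`, `t_{n,k}` of the
derivative of the composed scaling map are `O(ε̄^{2^k})` and converge
super-exponentially fast to limits `d_{*,k}`, `u_{*,k}`, `t_{*,k}`, with a
constant depending only on `σ`. -/
theorem stmt_11 (σ : ℝ) (hσ0 : 0 < σ) (hσ1 : σ < 1) :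
    ∃ C : ℝ, 0 < C ∧
      ∀ (m : ℕ), 1 ≤ m →
      ∀ (ebar : ℝ), 0 < ebar → ebar ≤ 1 / 2 →
      ∀ (k : ℕ) (t : ℕ → ℝ) (u d : ℕ → EuclideanSpace ℝ (Fin m)),
        (∀ j, k ≤ j →
          |t j| ≤ ebar ^ 2 ^ j ∧ ‖u j‖ ≤ ebar ^ 2 ^ j ∧ ‖d j‖ ≤ ebar ^ 2 ^ j) →
        ∃ (dstar ustar : EuclideanSpace ℝ (Fin m)) (tstar : ℝ),
          ∀ n : ℕ, k < n →
            ‖∑ j ∈ Finset.Ico k n, d j‖ ≤ 2 * ebar ^ 2 ^ k ∧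
            ‖∑ j ∈ Finset.Ico k n, (-σ) ^ (j - k) • u j‖ ≤ 2 * ebar ^ 2 ^ k ∧
            |∑ j ∈ Finset.Ico k n, (-σ) ^ (j - k) *
                (⟪u j, ∑ i ∈ Finset.Ico (j + 1) n, d i⟫ + t j)| ≤ C * ebar ^ 2 ^ k ∧
            ‖(∑ j ∈ Finset.Ico k n, d j) - dstar‖ ≤ C * ebar ^ 2 ^ n ∧
            ‖(∑ j ∈ Finset.Ico k n, (-σ) ^ (j - k) • u j) - ustar‖ ≤ C * ebar ^ 2 ^ n ∧
            |(∑ j ∈ Finset.Ico k n, (-σ) ^ (j - k) *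
                (⟪u j, ∑ i ∈ Finset.Ico (j + 1) n, d i⟫ + t j)) - tstar| ≤
              C * ebar ^ 2 ^ n := by
  refine ⟨4, by norm_num, fun m _ ε hε₀ hε k t u d h ↦ ?_⟩
  have hσ j (_ : k ≤ j) : |(-σ) ^ (j - k)| ≤ 1 := by
    simpa [abs_pow, abs_of_pos hσ0] using pow_le_one₀ hσ0.le hσ1.le
  obtain ⟨dstar, ustar, tstar, hstar⟩ := stmt_11_general (a := fun j ↦ ε ^ 2 ^ j)
    (two_mul_pow_two_pow_succ_le hε₀.le hε) (pow_two_pow_le_half hε₀.le hε k) hσ h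
  exact ⟨dstar, ustar, tstar, fun n hn ↦ hstar n hn.le⟩
end

section
/- In the setting of the composed scaling maps Ψ^n_k = D^n_k ∘ (id + S^n_k), assume each s_j is differentiable and write S^n_k for the first (ℝ-valued) component of S^n_k, with S^n_n := 0 and Ψ^n_n := id. Then for every point w and every k ≤ j < n the exact recursion ∂ₓS^n_j(w) = ∂ₓS^n_{j+1}(w) · (1 + ∂ₓs_j(Ψ^n_{j+1}(w))) + ∂ₓs_j(Ψ^n_{j+1}(w)) holds. Consequently, if 0 < σ̂ < 1 and C₀ > 0 are such that |∂ₓ s_j(Ψ^n_{j+1}(w))| ≤ C₀ σ̂^{n−j} for all k ≤ j ≤ n−1, then |∂ₓS^n_k(w)| ≤ exp( C₀ σ̂/(1−σ̂) ) − 1; in particular |∂ₓS^n_k| is bounded by a constant depending only on C₀ and σ̂, uniformly in k and n. -/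
/-!
All maps involved send lines parallel to the `x`-axis to such lines, so `∂ₓ` obeys a one-variable
chain rule along a composition. Since `Ψ^n_j` is the composition of the maps `D_i ∘ (id + s_i)`, the
slope of its first coordinate is `∏ αᵢ (1 + ∂ₓs_i(Ψ^n_{i+1}))`. Since also
`Ψ^n_j = D^n_j ∘ (id + S^n_j)`, where `D^n_j` is affine in `x` with slope `∏ αᵢ ≠ 0`, the same slope
is `(∏ αᵢ) (1 + ∂ₓS^n_j)`. Cancelling gives the closed form
`1 + ∂ₓS^n_j = ∏ (1 + ∂ₓs_i(Ψ^n_{i+1}))` over `j ≤ i < n`; splitting off the factor `i = j` is the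
recursion, and the bound follows from `1 + c ≤ exp c` and the geometric series.
-/

open scoped BigOperators RealInnerProductSpace

noncomputable section

/-- The linear model map `D_j` on `ℝ × ℝ × ℝᵐ`, given in block form by
`[[α, σt, σu],[0, σ, 0],[0, σd, σ Iₘ]]`. -/
def Dmap (m : ℕ) (a s tt : ℝ) (u d : EuclideanSpace ℝ (Fin m))
    (w : ℝ × ℝ × EuclideanSpace ℝ (Fin m)) : ℝ × ℝ × EuclideanSpace ℝ (Fin m) :=
  (a * w.1 + s * tt * w.2.1 + s * ⟪u, w.2.2⟫, s * w.2.1, s • (w.2.1 • d + w.2.2))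

/-- The partial derivative in the first (`x`-) coordinate of a scalar function
on `ℝ × ℝ × ℝᵐ`. -/
def pdx (m : ℕ) (f : ℝ × ℝ × EuclideanSpace ℝ (Fin m) → ℝ)
    (p : ℝ × ℝ × EuclideanSpace ℝ (Fin m)) : ℝ :=
  deriv (fun x : ℝ => f (x, p.2)) p.1

section FiberMaps

variable {𝕜 P : Type*}

/-- The map `(x, p) ↦ (x + s (x, p), ρ p)`. It stands for both `id + s_j` and `id + S^n_j`; the
change of the fibre parameter `p` is an arbitrary function, so `P` needs no additive structure. -/
def fiberShear [Add 𝕜] (s : 𝕜 × P → 𝕜) (ρ : P → P) (w : 𝕜 × P) : 𝕜 × P :=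
  (w.1 + s w, ρ w.2)

/-- `T` has the form `(x, p) ↦ (a * x + ℓ p, q p)`: it maps fibres `𝕜 × {p}` to fibres and is affine
of slope `a` on each of them. Of a block triangular linear map this keeps what matters for
differentiation in `x`. -/
def IsFiberAffine [Add 𝕜] [Mul 𝕜] (a : 𝕜) (T : 𝕜 × P → 𝕜 × P) : Prop :=
  ∃ (ℓ : P → 𝕜) (q : P → P), ∀ w, T w = (a * w.1 + ℓ w.2, q w.2)

namespace IsFiberAffine

lemma id [Semiring 𝕜] : IsFiberAffine (1 : 𝕜) (id : 𝕜 × P → 𝕜 × P) :=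
  ⟨fun _ => 0, fun p => p, fun w => by simp⟩

lemma comp [Semiring 𝕜] {a b : 𝕜} {T U : 𝕜 × P → 𝕜 × P}
    (hT : IsFiberAffine a T) (hU : IsFiberAffine b U) : IsFiberAffine (a * b) (T ∘ U) := by
  obtain ⟨ℓ, q, hT⟩ := hT
  obtain ⟨ℓ', q', hU⟩ := hU
  refine ⟨fun p => a * ℓ' p + ℓ (q' p), q ∘ q', fun w => ?_⟩
  simp only [Function.comp_apply, hU, hT, mul_add, mul_assoc, add_assoc]

lemma of_backward_recursion [CommSemiring 𝕜] {a : ℕ → 𝕜} {D T : ℕ → 𝕜 × P → 𝕜 × P} {j n : ℕ}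
    (hD : ∀ i, j ≤ i → i < n → IsFiberAffine (a i) (D i)) (hTn : T n = _root_.id)
    (hT : ∀ i, j ≤ i → i < n → ∀ w, T i w = D i (T (i + 1) w)) (hjn : j ≤ n) :
    IsFiberAffine (∏ i ∈ Finset.Ico j n, a i) (T j) := by
  refine Nat.decreasingInduction'
    (P := fun j => IsFiberAffine (∏ i ∈ Finset.Ico j n, a i) (T j)) (fun i hin hji ih => ?_) hjn ?_
  · rw [Finset.prod_eq_prod_Ico_succ_bot hin, show T i = D i ∘ T (i + 1) from funext (hT i hji hin)]
    exact (hD i hji hin).comp ih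
  · simpa [hTn] using IsFiberAffine.id

end IsFiberAffine

section Deriv

variable [NontriviallyNormedField 𝕜]

/-- The partial derivative `∂ₓf` of a scalar function on `𝕜 × P` in the first coordinate, with
value `0` where it does not exist; over `ℝ × ℝ × ℝᵐ` it is `pdx`. -/
def fiberDeriv (f : 𝕜 × P → 𝕜) (w : 𝕜 × P) : 𝕜 :=
  deriv (fun x => f (x, w.2)) w.1

/-- `T` maps the fibre `𝕜 × {w.2}` into a single fibre, and the first coordinate of this map has
derivative `c` at `w.1`. -/
structure HasFiberDerivAt (T : 𝕜 × P → 𝕜 × P) (c : 𝕜) (w : 𝕜 × P) : Prop where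
  snd_eq : ∀ x, (T (x, w.2)).2 = (T w).2
  hasDerivAt : HasDerivAt (fun x => (T (x, w.2)).1) c w.1

lemma IsFiberAffine.hasFiberDerivAt {a : 𝕜} {T : 𝕜 × P → 𝕜 × P} (hT : IsFiberAffine a T)
    (w : 𝕜 × P) : HasFiberDerivAt T a w := by
  obtain ⟨ℓ, q, hT⟩ := hT
  refine ⟨fun x => by simp only [hT], ?_⟩
  simpa only [hT, mul_one] using ((hasDerivAt_id' w.1).const_mul a).add_const (ℓ w.2)

lemma hasFiberDerivAt_fiberShear {s : 𝕜 × P → 𝕜} (ρ : P → P) {w : 𝕜 × P}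
    (hs : DifferentiableAt 𝕜 (fun x => s (x, w.2)) w.1) :
    HasFiberDerivAt (fiberShear s ρ) (1 + fiberDeriv s w) w :=
  ⟨fun _ => rfl, (hasDerivAt_id' w.1).add hs.hasDerivAt⟩

lemma HasFiberDerivAt.comp {T U : 𝕜 × P → 𝕜 × P} {b c : 𝕜} {w : 𝕜 × P}
    (hT : HasFiberDerivAt T b (U w)) (hU : HasFiberDerivAt U c w) :
    HasFiberDerivAt (T ∘ U) (b * c) w := by
  have hU_eq : ∀ x, U (x, w.2) = ((U (x, w.2)).1, (U w).2) := fun x => Prod.ext rfl (hU.snd_eq x)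
  refine ⟨fun x => ?_, ?_⟩
  · rw [Function.comp_apply, hU_eq]
    exact hT.snd_eq _
  · have h := HasDerivAt.comp w.1 hT.hasDerivAt hU.hasDerivAt
    refine h.congr_of_eventuallyEq (.of_forall fun x => ?_)
    exact congrArg (fun v => (T v).1) (hU_eq x)

lemma HasFiberDerivAt.of_backward_recursion {F T : ℕ → 𝕜 × P → 𝕜 × P} {c : ℕ → 𝕜} {w : 𝕜 × P}
    {j n : ℕ} (hF : ∀ i, j ≤ i → i < n → HasFiberDerivAt (F i) (c i) (T (i + 1) w))
    (hTn : T n = id) (hT : ∀ i, j ≤ i → i < n → ∀ w, T i w = F i (T (i + 1) w)) (hjn : j ≤ n) :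
    HasFiberDerivAt (T j) (∏ i ∈ Finset.Ico j n, c i) w := by
  refine Nat.decreasingInduction'
    (P := fun j => HasFiberDerivAt (T j) (∏ i ∈ Finset.Ico j n, c i) w)
    (fun i hin hji ih => ?_) hjn ?_
  · rw [Finset.prod_eq_prod_Ico_succ_bot hin, show T i = F i ∘ T (i + 1) from funext (hT i hji hin)]
    exact (hF i hji hin).comp ih
  · simpa [hTn] using IsFiberAffine.id.hasFiberDerivAt w

-- Differentiability of `S` is a conclusion: the affine map `T` can be inverted along the fibre.
lemma IsFiberAffine.hasDerivAt_of_comp_fiberShear {A c : 𝕜} {T : 𝕜 × P → 𝕜 × P}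
    (hT : IsFiberAffine A T) (hA : A ≠ 0) {S : 𝕜 × P → 𝕜} {τ : P → P} {w : 𝕜 × P}
    (h : HasFiberDerivAt (T ∘ fiberShear S τ) (A * c) w) :
    HasDerivAt (fun x => S (x, w.2)) (c - 1) w.1 := by
  obtain ⟨ℓ, q, hT⟩ := hT
  have hS : ∀ x, S (x, w.2) = A⁻¹ * (((T ∘ fiberShear S τ) (x, w.2)).1 - ℓ (τ w.2)) - x := by
    intro x
    simp only [Function.comp_apply, hT, fiberShear, add_sub_cancel_right, inv_mul_cancel_left₀ hA,
      add_sub_cancel_left]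
  rw [funext hS, ← inv_mul_cancel_left₀ hA c]
  exact ((h.hasDerivAt.sub_const _).const_mul A⁻¹).sub (hasDerivAt_id' w.1)

theorem hasDerivAt_prod_one_add_fiberDeriv_sub_one {j n : ℕ} (hjn : j ≤ n) {a : ℕ → 𝕜}
    (ha : ∀ i, j ≤ i → i < n → a i ≠ 0) {D : ℕ → 𝕜 × P → 𝕜 × P}
    (hD : ∀ i, j ≤ i → i < n → IsFiberAffine (a i) (D i)) {s : ℕ → 𝕜 × P → 𝕜}
    (hs : ∀ i, j ≤ i → i < n → ∀ p, Differentiable 𝕜 fun x => s i (x, p)) {ρ : ℕ → P → P}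
    {Ψ Dc : ℕ → 𝕜 × P → 𝕜 × P} (hΨn : Ψ n = id) (hDn : Dc n = id)
    (hΨ : ∀ i, j ≤ i → i < n → ∀ w, Ψ i w = D i (fiberShear (s i) (ρ i) (Ψ (i + 1) w)))
    (hDc : ∀ i, j ≤ i → i < n → ∀ w, Dc i w = D i (Dc (i + 1) w))
    {S : 𝕜 × P → 𝕜} {τ : P → P} (hdec : ∀ w, Ψ j w = Dc j (fiberShear S τ w)) (w : 𝕜 × P) :
    HasDerivAt (fun x => S (x, w.2))
      (∏ i ∈ Finset.Ico j n, (1 + fiberDeriv (s i) (Ψ (i + 1) w)) - 1) w.1 := by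
  have hstep : ∀ i, j ≤ i → i < n → HasFiberDerivAt (D i ∘ fiberShear (s i) (ρ i))
      (a i * (1 + fiberDeriv (s i) (Ψ (i + 1) w))) (Ψ (i + 1) w) := fun i hji hin =>
    ((hD i hji hin).hasFiberDerivAt _).comp (hasFiberDerivAt_fiberShear _ (hs i hji hin _ _))
  have hΨj := HasFiberDerivAt.of_backward_recursion hstep hΨn hΨ hjn
  have hDj := IsFiberAffine.of_backward_recursion hD hDn hDc hjn
  have ha_prod : ∏ i ∈ Finset.Ico j n, a i ≠ 0 := Finset.prod_ne_zero_iff.2 fun i hi =>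
    ha i (Finset.mem_Ico.1 hi).1 (Finset.mem_Ico.1 hi).2
  rw [Finset.prod_mul_distrib, show Ψ j = Dc j ∘ fiberShear S τ from funext hdec] at hΨj
  exact hDj.hasDerivAt_of_comp_fiberShear ha_prod hΨj

end Deriv

end FiberMaps

lemma norm_prod_one_add_sub_one_le_of_geometric {R : Type*} [NormedCommRing R] [NormOneClass R]
    {b : ℕ → R} {k n : ℕ} {C q : ℝ} (hC : 0 ≤ C) (hq0 : 0 ≤ q) (hq1 : q < 1)
    (hb : ∀ j, k ≤ j → j < n → ‖b j‖ ≤ C * q ^ (n - j)) :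
    ‖∏ j ∈ Finset.Ico k n, (1 + b j) - 1‖ ≤ Real.exp (C * q / (1 - q)) - 1 := by
  have hsum : ∑ j ∈ Finset.Ico k n, ‖b j‖ ≤ C * q / (1 - q) := calc
    ∑ j ∈ Finset.Ico k n, ‖b j‖ ≤ ∑ j ∈ Finset.Ico k n, C * q ^ (n - j) :=
      Finset.sum_le_sum fun j hj => hb j (Finset.mem_Ico.1 hj).1 (Finset.mem_Ico.1 hj).2
    _ = C * ∑ i ∈ Finset.Ico 1 (n + 1 - k), q ^ i := by
      rw [← Finset.mul_sum, Finset.sum_Ico_reflect (fun i => q ^ i) k n.le_succ,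
        Nat.add_sub_cancel_left]
    _ ≤ C * (q ^ 1 / (1 - q)) := by gcongr; exact geom_sum_Ico_le_of_lt_one hq0 hq1
    _ = C * q / (1 - q) := by rw [pow_one, mul_div_assoc]
  refine (Finset.norm_prod_one_add_sub_one_le _ b).trans ?_
  gcongr

lemma isFiberAffine_Dmap (m : ℕ) (a s tt : ℝ) (u d : EuclideanSpace ℝ (Fin m)) :
    IsFiberAffine a (Dmap m a s tt u d) :=
  ⟨fun p => s * tt * p.1 + s * ⟪u, p.2⟫, fun p => (s * p.1, s • (p.1 • d + p.2)),
    fun w => by simp only [Dmap, add_assoc]⟩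

theorem stmt_13_general {𝕜 P : Type*} [NontriviallyNormedField 𝕜] {k n : ℕ} (hkn : k ≤ n)
    {a : ℕ → 𝕜} (ha : ∀ j, k ≤ j → j < n → a j ≠ 0) {D : ℕ → 𝕜 × P → 𝕜 × P}
    (hD : ∀ j, k ≤ j → j < n → IsFiberAffine (a j) (D j)) {s : ℕ → 𝕜 × P → 𝕜}
    (hs : ∀ j, k ≤ j → j < n → ∀ p, Differentiable 𝕜 fun x => s j (x, p)) {ρ : ℕ → P → P}
    {Ψ Dc : ℕ → 𝕜 × P → 𝕜 × P} (hΨn : Ψ n = id) (hDn : Dc n = id)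
    (hΨ : ∀ j, k ≤ j → j < n → ∀ w, Ψ j w = D j (fiberShear (s j) (ρ j) (Ψ (j + 1) w)))
    (hDc : ∀ j, k ≤ j → j < n → ∀ w, Dc j w = D j (Dc (j + 1) w))
    {S : ℕ → 𝕜 × P → 𝕜} {τ : ℕ → P → P}
    (hdec : ∀ j, k ≤ j → j ≤ n → ∀ w, Ψ j w = Dc j (fiberShear (S j) (τ j) w)) (w : 𝕜 × P) :
    (∀ j, k ≤ j → j < n →
      fiberDeriv (S j) w =
        fiberDeriv (S (j + 1)) w * (1 + fiberDeriv (s j) (Ψ (j + 1) w)) +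
          fiberDeriv (s j) (Ψ (j + 1) w)) ∧
    (∀ C q : ℝ, 0 ≤ C → 0 ≤ q → q < 1 →
      (∀ j, k ≤ j → j < n → ‖fiberDeriv (s j) (Ψ (j + 1) w)‖ ≤ C * q ^ (n - j)) →
      ‖fiberDeriv (S k) w‖ ≤ Real.exp (C * q / (1 - q)) - 1) := by
  have hprod : ∀ j, k ≤ j → j ≤ n → fiberDeriv (S j) w =
      ∏ i ∈ Finset.Ico j n, (1 + fiberDeriv (s i) (Ψ (i + 1) w)) - 1 := fun j hkj hjn =>
    (hasDerivAt_prod_one_add_fiberDeriv_sub_one hjn (fun i hi => ha i (hkj.trans hi))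
      (fun i hi => hD i (hkj.trans hi)) (fun i hi => hs i (hkj.trans hi)) hΨn hDn
      (fun i hi => hΨ i (hkj.trans hi)) (fun i hi => hDc i (hkj.trans hi))
      (hdec j hkj hjn) w).deriv
  refine ⟨fun j hkj hjn => ?_, fun C q hC hq0 hq1 hb => ?_⟩
  · rw [hprod j hkj hjn.le, hprod (j + 1) (hkj.trans j.le_succ) hjn,
      Finset.prod_eq_prod_Ico_succ_bot hjn]
    ring
  · rw [hprod k le_rfl hkn]
    exact norm_prod_one_add_sub_one_le_of_geometric hC hq0 hq1 hb

/-- the exact recursion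
`∂ₓS^n_j = ∂ₓS^n_{j+1} (1 + ∂ₓs_j ∘ Ψ^n_{j+1}) + ∂ₓs_j ∘ Ψ^n_{j+1}`, and the
resulting uniform bound `|∂ₓS^n_k| ≤ exp(C₀ σ̂/(1-σ̂)) - 1`. -/
theorem stmt_13 (m : ℕ) (hm : 1 ≤ m) (k n : ℕ) (hkn : k < n)
    (α σv t : ℕ → ℝ) (u d : ℕ → EuclideanSpace ℝ (Fin m))
    (hα : ∀ j, α j ≠ 0) (hσ : ∀ j, σv j ≠ 0)
    (sf : ℕ → ℝ × ℝ × EuclideanSpace ℝ (Fin m) → ℝ)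
    (rf : ℕ → ℝ → EuclideanSpace ℝ (Fin m))
    (hs : ∀ j, Differentiable ℝ (sf j))
    (Φ Dc : ℕ → ℝ × ℝ × EuclideanSpace ℝ (Fin m) → ℝ × ℝ × EuclideanSpace ℝ (Fin m))
    (hΦn : Φ n = id) (hDn : Dc n = id)
    (hΦ : ∀ j, k ≤ j → j < n → ∀ w,
      Φ j w = Dmap m (α j) (σv j) (t j) (u j) (d j)
        (Φ (j + 1) w + (sf j (Φ (j + 1) w), 0, rf j ((Φ (j + 1) w).2.1))))
    (hDc : ∀ j, k ≤ j → j < n → ∀ w,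
      Dc j w = Dmap m (α j) (σv j) (t j) (u j) (d j) (Dc (j + 1) w))
    (S1 : ℕ → ℝ × ℝ × EuclideanSpace ℝ (Fin m) → ℝ)
    (R : ℕ → ℝ → EuclideanSpace ℝ (Fin m))
    (hS1n : ∀ w, S1 n w = 0) (hRn : ∀ y : ℝ, R n y = 0)
    (hdec : ∀ j, k ≤ j → j ≤ n → ∀ w, Φ j w = Dc j (w + (S1 j w, 0, R j w.2.1))) :
    ∀ w : ℝ × ℝ × EuclideanSpace ℝ (Fin m),
      (∀ j, k ≤ j → j < n →
        pdx m (S1 j) w =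
          pdx m (S1 (j + 1)) w * (1 + pdx m (sf j) (Φ (j + 1) w)) +
            pdx m (sf j) (Φ (j + 1) w)) ∧
      (∀ C₀ σh : ℝ, 0 < C₀ → 0 < σh → σh < 1 →
        (∀ j, k ≤ j → j < n → |pdx m (sf j) (Φ (j + 1) w)| ≤ C₀ * σh ^ (n - j)) →
        |pdx m (S1 k) w| ≤ Real.exp (C₀ * σh / (1 - σh)) - 1) := by
  intro w
  have hs_slice : ∀ j p, Differentiable ℝ fun x => sf j (x, p) := fun j p =>
    (hs j).comp (differentiable_id.prodMk (differentiable_const p))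
  obtain ⟨hrec, hbound⟩ := stmt_13_general (ρ := fun j p => p + (0, rf j p.1))
    (τ := fun j p => p + (0, R j p.1)) hkn.le (fun j _ _ => hα j)
    (fun j _ _ => isFiberAffine_Dmap m _ (σv j) (t j) (u j) (d j)) (fun j _ _ => hs_slice j)
    hΦn hDn hΦ hDc hdec w
  exact ⟨hrec, fun C₀ σh hC₀ hσh => hbound C₀ σh hC₀.le hσh.le⟩
end
end

section
/- Given any real numbers 0 < A₀ < A₁, any 0 < σ < 1 and any integer p ≥ 2, the set of parameters b ∈ [0,1] for which there are infinitely many pairs of integers 0 < k < n satisfying A₀ < b^{p^k} / σ^{n−k} < A₁ is a dense G_δ subset of [0,1] of full Lebesgue measure. -/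
/-- The set of parameters `b ∈ [0,1]` admitting infinitely many pairs
`0 < k < n` with `A₀ < b^{p^k}/σ^{n-k} < A₁`. -/
def goodParamSet (A₀ A₁ σ : ℝ) (p : ℕ) : Set ℝ :=
  {b : ℝ | b ∈ Set.Icc (0 : ℝ) 1 ∧
    {q : ℕ × ℕ | 0 < q.1 ∧ q.1 < q.2 ∧
      A₀ < b ^ p ^ q.1 / σ ^ (q.2 - q.1) ∧
      b ^ p ^ q.1 / σ ^ (q.2 - q.1) < A₁}.Infinite}

/-!
Write `b = σ ^ y` with `y > 0`, so that `b ^ p ^ k / σ ^ m = σ ^ (p ^ k * y - m)`. For `m = n - k`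
the double inequality places `p ^ k * y - m` in the interval `(logb σ A₁, logb σ A₀)`: modulo `1`,
the orbit of `y` under multiplication by `p` visits a fixed nonempty open arc at time `k`. The
constraint `m > 0` is automatic for large `k`, because `p ^ k * y → ∞`.

Multiplication by `p` is ergodic on the circle, so almost every orbit visits the arc infinitely
often; the smooth map `y ↦ σ ^ y` preserves null sets, so almost every `b` is good. Full measure
gives density, and points lying in infinitely many of countably many open sets form a `G_δ` set.
-/

open Filter MeasureTheory Set

section Topology

variable {X : Type*} [TopologicalSpace X]

lemma isGδ_infinite_mem {ι : Type*} [Countable ι] {U : ι → Set X} (hU : ∀ i, IsOpen (U i)) :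
    IsGδ {x | {i | x ∈ U i}.Infinite} := by
  have h_eq : {x | {i | x ∈ U i}.Infinite} = ⋂ F : Finset ι, ⋃ i ∉ F, U i := by
    ext x
    simp only [mem_ofPred_eq, mem_iInter, mem_iUnion, exists_prop]
    refine ⟨fun h F => ?_, fun h hfin => ?_⟩
    · obtain ⟨i, hi, hiF⟩ := h.exists_notMem_finset F
      exact ⟨i, hiF, hi⟩
    · obtain ⟨i, hiF, hi⟩ := h hfin.toFinset
      exact hiF (hfin.mem_toFinset.2 hi)
  rw [h_eq]
  exact .iInter_of_isOpen fun F => isOpen_biUnion fun i _ => hU i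

lemma subset_closure_of_measure_sdiff_eq_zero [MeasurableSpace X] {μ : Measure X}
    [μ.IsOpenPosMeasure] {s t : Set X} (ht : t ⊆ closure (interior t)) (h : μ (t \ s) = 0) :
    t ⊆ closure s := by
  have h_null : μ (interior t \ closure s) = 0 :=
    measure_mono_null (sdiff_subset_sdiff interior_subset subset_closure) h
  have h_empty : interior t \ closure s = ∅ :=
    (isOpen_interior.sdiff isClosed_closure).eq_empty_of_measure_zero h_null
  exact ht.trans (closure_minimal (sdiff_eq_empty.1 h_empty) isClosed_closure)

end Topology

section Recurrence

lemma preimage_frequently_iterate_mem {α : Type*} (f : α → α) (s : Set α) :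
    f ⁻¹' {x | ∃ᶠ n in atTop, f^[n] x ∈ s} = {x | ∃ᶠ n in atTop, f^[n] x ∈ s} := by
  ext x
  have h_shift : (∃ᶠ n in map (· + 1) atTop, f^[n] x ∈ s) ↔ ∃ᶠ n in atTop, f^[n + 1] x ∈ s :=
    frequently_map
  rw [map_add_atTop_eq_nat] at h_shift
  exact h_shift.symm

variable {α : Type*} [MeasurableSpace α] {μ : Measure α} {f : α → α} {s : Set α}

lemma measurableSet_frequently_iterate_mem (hf : Measurable f) (hs : MeasurableSet s) :
    MeasurableSet {x | ∃ᶠ n in atTop, f^[n] x ∈ s} := by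
  have h_eq : {x | ∃ᶠ n in atTop, f^[n] x ∈ s} = limsup (fun n => f^[n] ⁻¹' s) atTop := by
    ext x
    simp only [mem_ofPred_eq, mem_limsup_iff_frequently_mem, mem_preimage]
  rw [h_eq]
  exact .measurableSet_limsup fun n => hf.iterate n hs

/-- By recurrence, the invariant set of points visiting `s` infinitely often contains almost all of
`s`, so by ergodicity it has full measure. -/
lemma ae_frequently_iterate_mem (hc : Conservative f μ) (he : PreErgodic f μ)
    (hs : MeasurableSet s) (hμs : μ s ≠ 0) : ∀ᵐ x ∂μ, ∃ᶠ n in atTop, f^[n] x ∈ s := by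
  refine (he.ae_mem_or_ae_notMem (measurableSet_frequently_iterate_mem hc.measurable hs)
    (preimage_frequently_iterate_mem f s)).resolve_right fun h_never => hμs ?_
  rw [measure_eq_zero_iff_ae_notMem]
  filter_upwards [h_never, hc.ae_mem_imp_frequently_image_mem hs.nullMeasurableSet]
    with x hx h_rec hxs
  exact hx (h_rec hxs)

end Recurrence

section Circle

variable {T : ℝ}

lemma coe_mem_coe_image_iff {U : Set ℝ} {x : ℝ} :
    (x : AddCircle T) ∈ ((↑) : ℝ → AddCircle T) '' U ↔ ∃ m : ℤ, x - m • T ∈ U := by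
  constructor
  · rintro ⟨u, hu, hux⟩
    rw [eq_comm, ← sub_eq_zero, ← AddCircle.coe_sub, AddCircle.coe_eq_zero_iff] at hux
    obtain ⟨m, hm⟩ := hux
    exact ⟨m, by rwa [hm, sub_sub_cancel]⟩
  · rintro ⟨m, hm⟩
    refine ⟨_, hm, ?_⟩
    rw [AddCircle.coe_sub, AddCircle.coe_zsmul, AddCircle.coe_period, smul_zero, sub_zero]

variable [Fact (0 < T)] {p : ℕ}

lemma ae_frequently_pow_nsmul_mem (hp : 1 < p) {s : Set (AddCircle T)} (hs : MeasurableSet s)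
    (hvol : volume s ≠ 0) : ∀ᵐ x : AddCircle T, ∃ᶠ k in atTop, p ^ k • x ∈ s := by
  have herg : Ergodic fun x : AddCircle T => p • x := AddCircle.ergodic_nsmul hp
  simpa only [smul_iterate_apply] using
    ae_frequently_iterate_mem herg.toMeasurePreserving.conservative herg.toPreErgodic hs hvol

lemma quasiMeasurePreserving_coe_addCircle :
    Measure.QuasiMeasurePreserving ((↑) : ℝ → AddCircle T) := by
  refine ⟨AddCircle.measurable_mk', .mk fun s hs hs0 => ?_⟩
  rw [Measure.map_apply AddCircle.measurable_mk' hs, measure_eq_zero_iff_ae_notMem,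
    ← Measure.restrict_univ (μ := volume), ← iUnion_Ioc_zsmul (Fact.out : 0 < T),
    ae_restrict_iUnion_iff]
  intro n
  rw [add_one_zsmul]
  exact (AddCircle.measurePreserving_mk T (n • T)).quasiMeasurePreserving.ae
    (measure_eq_zero_iff_ae_notMem.1 hs0)

lemma ae_frequently_exists_pow_nsmul_sub_zsmul_mem (hp : 1 < p) {U : Set ℝ} (hU : IsOpen U)
    (hne : U.Nonempty) : ∀ᵐ y : ℝ, ∃ᶠ k in atTop, ∃ m : ℤ, p ^ k • y - m • T ∈ U := by
  have h_open : IsOpen (((↑) : ℝ → AddCircle T) '' U) := QuotientAddGroup.isOpenMap_coe _ hU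
  filter_upwards [quasiMeasurePreserving_coe_addCircle.ae <| ae_frequently_pow_nsmul_mem hp
    h_open.measurableSet (h_open.measure_ne_zero volume (hne.image _))] with y hy
  simpa only [← AddCircle.coe_nsmul, coe_mem_coe_image_iff] using hy

end Circle

lemma frequently_exists_pos_nat_sub_mem {ι : Type*} {l : Filter ι} {u : ι → ℝ} {U : Set ℝ}
    (hu : Tendsto u l atTop) (hU : BddAbove U) (h : ∃ᶠ i in l, ∃ m : ℤ, u i - m ∈ U) :
    ∃ᶠ i in l, ∃ m : ℕ, 0 < m ∧ u i - m ∈ U := by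
  obtain ⟨B, hB⟩ := hU
  refine (h.and_eventually (hu.eventually_gt_atTop B)).mono ?_
  rintro i ⟨⟨m, hm⟩, hi⟩
  have hm0 : 0 < m := by
    have : u i - m ≤ B := hB hm
    exact_mod_cast (by linarith : (0 : ℝ) < m)
  lift m to ℕ using hm0.le
  exact ⟨m, mod_cast hm0, mod_cast hm⟩

section Rpow

variable {σ : ℝ}

lemma rpow_pow_div_pow (hσ : 0 < σ) (y : ℝ) (N m : ℕ) :
    (σ ^ y) ^ N / σ ^ m = σ ^ (N * y - m) := by
  rw [Real.rpow_sub hσ, Real.rpow_natCast, mul_comm, Real.rpow_mul_natCast hσ.le]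

lemma rpow_mem_Ioo_iff_of_base_lt_one {A₀ A₁ x : ℝ} (hσ0 : 0 < σ) (hσ1 : σ < 1) (hA₀ : 0 < A₀)
    (hA₁ : 0 < A₁) : σ ^ x ∈ Ioo A₀ A₁ ↔ x ∈ Ioo (Real.logb σ A₁) (Real.logb σ A₀) := by
  rw [mem_Ioo, mem_Ioo, Real.lt_logb_iff_rpow_lt_of_base_lt_one hσ0 hσ1 hA₀,
    Real.logb_lt_iff_lt_rpow_of_base_lt_one hσ0 hσ1 hA₁, and_comm]

lemma ae_pos_imp_of_ae_const_rpow (hσ0 : 0 < σ) (hσ1 : σ ≠ 1) {P : ℝ → Prop}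
    (h : ∀ᵐ y : ℝ, P (σ ^ y)) : ∀ᵐ b : ℝ, 0 < b → P b := by
  have h_diff : Differentiable ℝ fun y : ℝ => σ ^ y := by
    fun_prop (disch := exact fun _ => hσ0.ne')
  have h_null : volume ((fun y : ℝ => σ ^ y) '' {y | ¬P (σ ^ y)}) = 0 :=
    addHaar_image_eq_zero_of_differentiableOn_of_addHaar_eq_zero volume h_diff.differentiableOn
      (ae_iff.1 h)
  refine measure_mono_null (fun b hb => ?_) h_null
  obtain ⟨hb0, hPb⟩ := Classical.not_imp.1 hb
  have h_exp : σ ^ Real.logb σ b = b := Real.rpow_logb hσ0 hσ1 hb0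
  exact ⟨Real.logb σ b, by rwa [mem_ofPred_eq, h_exp], h_exp⟩

end Rpow

section GoodParamSet

variable {A₀ A₁ σ b : ℝ} {p : ℕ}

lemma isGδ_goodParamSet (A₀ A₁ σ : ℝ) (p : ℕ) : IsGδ (goodParamSet A₀ A₁ σ p) := by
  refine isClosed_Icc.isGδ.inter (isGδ_infinite_mem fun q => ?_)
  refine isOpen_const.and (isOpen_const.and (IsOpen.and ?_ ?_))
  · exact isOpen_lt continuous_const (by fun_prop)
  · exact isOpen_lt (by fun_prop) continuous_const

lemma mem_goodParamSet_of_frequently (hb : b ∈ Icc (0 : ℝ) 1)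
    (h : ∃ᶠ k in atTop, ∃ m : ℕ, 0 < m ∧ b ^ p ^ k / σ ^ m ∈ Ioo A₀ A₁) :
    b ∈ goodParamSet A₀ A₁ σ p := by
  have h_inf := Nat.frequently_atTop_iff_infinite.1 (h.and_eventually (eventually_gt_atTop 0))
  refine ⟨hb, .of_image Prod.fst (h_inf.mono ?_)⟩
  rintro k ⟨⟨m, hm, h_ratio⟩, hk⟩
  refine ⟨(k, k + m), ⟨hk, Nat.lt_add_of_pos_right hm, ?_⟩, rfl⟩
  rwa [Nat.add_sub_cancel_left]

lemma rpow_mem_goodParamSet {y : ℝ} (hA₀ : 0 < A₀) (hA₁ : 0 < A₁) (hσ0 : 0 < σ) (hσ1 : σ < 1)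
    (hp : 1 < p) (hy : 0 < y)
    (h : ∃ᶠ k in atTop, ∃ m : ℤ, (p ^ k : ℝ) * y - m ∈ Ioo (Real.logb σ A₁) (Real.logb σ A₀)) :
    σ ^ y ∈ goodParamSet A₀ A₁ σ p := by
  have h_tendsto : Tendsto (fun k : ℕ => (p ^ k : ℝ) * y) atTop atTop :=
    (tendsto_pow_atTop_atTop_of_one_lt (mod_cast hp)).atTop_mul_const hy
  refine mem_goodParamSet_of_frequently
    ⟨Real.rpow_nonneg hσ0.le y, Real.rpow_le_one hσ0.le hσ1.le hy.le⟩ ?_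
  refine (frequently_exists_pos_nat_sub_mem h_tendsto bddAbove_Ioo h).mono ?_
  rintro k ⟨m, hm, hkm⟩
  refine ⟨m, hm, ?_⟩
  rw [rpow_pow_div_pow hσ0, rpow_mem_Ioo_iff_of_base_lt_one hσ0 hσ1 hA₀ hA₁]
  exact_mod_cast hkm

lemma ae_mem_goodParamSet (hA₀ : 0 < A₀) (hA : A₀ < A₁) (hσ0 : 0 < σ) (hσ1 : σ < 1)
    (hp : 1 < p) : ∀ᵐ b : ℝ, b ∈ Ioo 0 1 → b ∈ goodParamSet A₀ A₁ σ p := by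
  have h_visits : ∀ᵐ y : ℝ, ∃ᶠ k in atTop, ∃ m : ℤ,
      (p ^ k : ℝ) * y - m ∈ Ioo (Real.logb σ A₁) (Real.logb σ A₀) := by
    simpa only [nsmul_eq_mul, Nat.cast_pow, zsmul_eq_mul, mul_one] using
      ae_frequently_exists_pow_nsmul_sub_zsmul_mem (T := 1) hp isOpen_Ioo
        (nonempty_Ioo.2 (Real.logb_lt_logb_of_base_lt_one hσ0 hσ1 hA₀ hA))
  have h_rpow : ∀ᵐ y : ℝ, σ ^ y < 1 → σ ^ y ∈ goodParamSet A₀ A₁ σ p := by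
    filter_upwards [h_visits] with y hy hlt
    have hy0 : 0 < y := by
      rwa [← Real.rpow_zero σ, Real.rpow_lt_rpow_left_iff_of_base_lt_one hσ0 hσ1] at hlt
    exact rpow_mem_goodParamSet hA₀ (hA₀.trans hA) hσ0 hσ1 hp hy0 hy
  filter_upwards [ae_pos_imp_of_ae_const_rpow hσ0 hσ1.ne
    (P := fun b => b < 1 → b ∈ goodParamSet A₀ A₁ σ p) h_rpow] with b hb hb01
  exact hb hb01.1 hb01.2

end GoodParamSet

/-- for any `0 < A₀ < A₁`, `0 < σ < 1` and `p ≥ 2`, the set of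
`b ∈ [0,1]` with infinitely many pairs `0 < k < n` satisfying
`A₀ < b^{p^k}/σ^{n-k} < A₁` is a dense `G_δ` subset of `[0,1]` of full
Lebesgue measure. -/
theorem stmt_14 (A₀ A₁ σ : ℝ) (p : ℕ)
    (hA₀ : 0 < A₀) (hA : A₀ < A₁) (hσ0 : 0 < σ) (hσ1 : σ < 1) (hp : 2 ≤ p) :
    IsGδ (goodParamSet A₀ A₁ σ p) ∧
    Set.Icc (0 : ℝ) 1 ⊆ closure (goodParamSet A₀ A₁ σ p) ∧
    MeasureTheory.volume (Set.Icc (0 : ℝ) 1 \ goodParamSet A₀ A₁ σ p) = 0 := by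
  have h_full : volume (Icc (0 : ℝ) 1 \ goodParamSet A₀ A₁ σ p) = 0 := by
    rw [← ae_le_set]
    exact Ioo_ae_eq_Icc.symm.le.trans (ae_mem_goodParamSet hA₀ hA hσ0 hσ1 hp)
  exact ⟨isGδ_goodParamSet A₀ A₁ σ p,
    subset_closure_of_measure_sdiff_eq_zero (closure_interior_Icc zero_ne_one).ge h_full, h_full⟩
end

section
/- Let n, m ≥ 1 and let f : ℝ^n × ℝ^m → ℝ^m be continuous and, for each fixed x ∈ ℝ^n, continuously differentiable in the second variable u ∈ ℝ^m. Suppose there is d > 0 such that for all (x,u) ∈ ℝ^n × ℝ^m and every 1 ≤ i ≤ m, the Jacobian matrix J(x,u) of u ↦ f(x,u) satisfies |J(x,u)_{ii}| − Σ_{j ≠ i} |J(x,u)_{ij}| ≥ d. Then there exists a unique map g : ℝ^n → ℝ^m such that f(x, g(x)) = 0 for all x ∈ ℝ^n; moreover g is continuous, and if f is continuously differentiable then g is continuously differentiable. -/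
/-!
For fixed `x`, compare `u` and `v` through the coordinate `i` in which `u - v` is largest. By the
mean value theorem for the `i`-th component of `f (x, ·)`, the difference of its values at `u` and
`v` is row `i` of some Jacobian matrix applied to `u - v`, and dominance of that row makes it at
least `d` times the sup norm of `u - v`. Hence `f (x, ·)` is antilipschitz with a constant
independent of `x`. So it is injective with closed range, and its range is open by the inverse
function theorem: it is a bijection, which defines `g`. The uniform antilipschitz constant makes
`g` continuous. Where `f` is `C^k`, global uniqueness of zeros identifies `g` with the local
implicit functions.
-/

open scoped BigOperators

open Filter Function Module Topology

section ImplicitFunction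

theorem isClosed_range_of_antilipschitzWith {α β : Type*} [PseudoEMetricSpace α] [CompleteSpace α]
    [EMetricSpace β] {K : NNReal} {φ : α → β} (hφ : AntilipschitzWith K φ) (hcont : Continuous φ) :
    IsClosed (Set.range φ) := by
  refine isClosed_of_closure_subset fun y hy => ?_
  have hne : NeBot (comap φ (𝓝 y)) :=
    comap_neBot_iff_frequently.2 (mem_closure_iff_frequently.1 hy)
  obtain ⟨a, ha⟩ := CompleteSpace.complete (cauchy_nhds.comap' hφ.comap_uniformity_le hne)
  exact ⟨a, tendsto_nhds_unique ((hcont.tendsto a).mono_left ha) tendsto_comap⟩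

theorem bijective_of_antilipschitzWith_of_isInvertible_fderiv {𝕜 E F : Type*} [RCLike 𝕜]
    [NormedAddCommGroup E] [NormedSpace 𝕜 E] [CompleteSpace E]
    [NormedAddCommGroup F] [NormedSpace 𝕜 F] {K : NNReal} {φ : E → F}
    (hφ : AntilipschitzWith K φ) (hdiff : ContDiff 𝕜 1 φ)
    (hinv : ∀ u, (fderiv 𝕜 φ u).IsInvertible) : Bijective φ := by
  have hopen : IsOpenMap φ := by
    choose e he using hinv
    refine isOpenMap_of_hasStrictFDerivAt_equiv (f' := e) fun u => ?_
    rw [he u]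
    exact hdiff.contDiffAt.hasStrictFDerivAt one_ne_zero
  have : PreconnectedSpace F :=
    letI := NormedSpace.restrictScalars ℝ 𝕜 F
    inferInstance
  have hrange : IsClopen (Set.range φ) :=
    ⟨isClosed_range_of_antilipschitzWith hφ hdiff.continuous, hopen.isOpen_range⟩
  exact ⟨hφ.injective, Set.range_eq_univ.1 (hrange.eq_univ (Set.range_nonempty φ))⟩

theorem continuous_of_apply_eq_of_antilipschitzWith {X α β : Type*} [TopologicalSpace X]
    [PseudoEMetricSpace α] [PseudoEMetricSpace β] {K : NNReal} {f : X × α → β} {g : X → α} {c : β}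
    (hcont : ∀ u, Continuous fun x => f (x, u))
    (hanti : ∀ x, AntilipschitzWith K fun u => f (x, u)) (hg : ∀ x, f (x, g x) = c) :
    Continuous g := by
  refine continuous_iff_continuousAt.2 fun x => tendsto_iff_edist_tendsto_0.2 ?_
  have hbound (y : X) : edist (g y) (g x) ≤ K * edist c (f (y, g x)) := by
    simpa only [hg y] using hanti y (g y) (g x)
  have hlim : Tendsto (fun y => K * edist c (f (y, g x))) (𝓝 x) (𝓝 0) := by
    have hedist : Tendsto (fun y => edist c (f (y, g x))) (𝓝 x) (𝓝 0) := by
      simpa only [hg x, edist_self] using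
        (tendsto_const_nhds (x := c)).edist ((hcont (g x)).tendsto x)
    simpa only [mul_zero] using ENNReal.Tendsto.const_mul hedist (.inr ENNReal.coe_ne_top)
  exact tendsto_of_tendsto_of_tendsto_of_le_of_le tendsto_const_nhds hlim (fun _ => zero_le) hbound

theorem contDiff_of_apply_eq_of_isInvertible_fderiv {𝕜 X E F : Type*} [RCLike 𝕜]
    [NormedAddCommGroup X] [NormedSpace 𝕜 X] [CompleteSpace X]
    [NormedAddCommGroup E] [NormedSpace 𝕜 E] [CompleteSpace E]
    [NormedAddCommGroup F] [NormedSpace 𝕜 F] [CompleteSpace F]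
    {k : WithTop ℕ∞} {f : X × E → F} {g : X → E} {c : F} (hk : k ≠ 0) (hf : ContDiff 𝕜 k f)
    (hinj : ∀ x, Injective fun u => f (x, u))
    (hinv : ∀ x, (fderiv 𝕜 (fun u => f (x, u)) (g x)).IsInvertible) (hg : ∀ x, f (x, g x) = c) :
    ContDiff 𝕜 k g := by
  refine contDiff_iff_contDiffAt.2 fun x => ?_
  have hfx : ContDiffAt 𝕜 k f (x, g x) := hf.contDiffAt
  have hpartial : fderiv 𝕜 f (x, g x) ∘L .inr 𝕜 X E = fderiv 𝕜 (fun u => f (x, u)) (g x) :=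
    ((hfx.differentiableAt hk).hasFDerivAt.comp (g x)
      (hasFDerivAt_prodMk_right x (g x))).fderiv.symm
  have hinvx : (fderiv 𝕜 f (x, g x) ∘L .inr 𝕜 X E).IsInvertible := hpartial ▸ hinv x
  refine (hfx.contDiffAt_implicitFunction hk hinvx).congr_of_eventuallyEq ?_
  filter_upwards [hfx.eventually_apply_implicitFunction hk hinvx] with y hy
  exact hinj y ((hg y).trans (hy.trans (hg x)).symm)

end ImplicitFunction

section RowDominance

variable {ι : Type*} [Fintype ι] [DecidableEq ι]

theorem mul_norm_apply_le_norm_dotProduct {R : Type*} [SeminormedRing R] [NormMulClass R] {d : ℝ}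
    {a w : ι → R} {i : ι} (ha : d ≤ ‖a i‖ - ∑ j ∈ Finset.univ.erase i, ‖a j‖)
    (hw : ∀ j, ‖w j‖ ≤ ‖w i‖) : d * ‖w i‖ ≤ ‖a ⬝ᵥ w‖ := by
  have hoff : ‖∑ j ∈ Finset.univ.erase i, a j * w j‖ ≤
      (∑ j ∈ Finset.univ.erase i, ‖a j‖) * ‖w i‖ := by
    rw [Finset.sum_mul]
    refine norm_sum_le_of_le _ fun j _ => ?_
    rw [norm_mul]
    exact mul_le_mul_of_nonneg_left (hw j) (norm_nonneg _)
  calc d * ‖w i‖ ≤ (‖a i‖ - ∑ j ∈ Finset.univ.erase i, ‖a j‖) * ‖w i‖ := by gcongr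
    _ = ‖a i * w i‖ - (∑ j ∈ Finset.univ.erase i, ‖a j‖) * ‖w i‖ := by rw [sub_mul, norm_mul]
    _ ≤ ‖a i * w i‖ - ‖∑ j ∈ Finset.univ.erase i, a j * w j‖ := by gcongr
    _ ≤ ‖a i * w i + ∑ j ∈ Finset.univ.erase i, a j * w j‖ := norm_sub_le_norm_add _ _
    _ = ‖a ⬝ᵥ w‖ := by
      rw [dotProduct, Finset.add_sum_erase _ (fun j => a j * w j) (Finset.mem_univ i)]

/-- Row diagonal dominance with margin `d` of a square matrix; strict dominance is the case
`0 < d`. -/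
def IsRowDominant {R : Type*} [Norm R] (d : ℝ) (A : Matrix ι ι R) : Prop :=
  ∀ i, d ≤ ‖A i i‖ - ∑ j ∈ Finset.univ.erase i, ‖A i j‖

namespace IsRowDominant

variable {d : ℝ}

theorem det_ne_zero {K : Type*} [NormedField K] {A : Matrix ι ι K} (hd : 0 < d)
    (hA : IsRowDominant d A) : A.det ≠ 0 :=
  det_ne_zero_of_sum_row_lt_diag fun i => sub_pos.1 (hd.trans_le (hA i))

theorem isInvertible {𝕜 E F : Type*} [NontriviallyNormedField 𝕜] [CompleteSpace 𝕜]
    [NormedAddCommGroup E] [NormedSpace 𝕜 E] [NormedAddCommGroup F] [NormedSpace 𝕜 F]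
    {b : Basis ι 𝕜 E} {c : Basis ι 𝕜 F} {L : E →L[𝕜] F} (hd : 0 < d)
    (hL : IsRowDominant d (LinearMap.toMatrix b c (L : E →ₗ[𝕜] F))) : L.IsInvertible := by
  have : FiniteDimensional 𝕜 E := b.finiteDimensional_of_finite
  exact ⟨(LinearEquiv.ofIsUnitDet (hL.det_ne_zero hd).isUnit).toContinuousLinearEquiv, rfl⟩

variable {E F : Type*} [NormedAddCommGroup E] [NormedSpace ℝ E] [NormedAddCommGroup F]
  [NormedSpace ℝ F] (b : Basis ι ℝ E) (c : Basis ι ℝ F)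

theorem mul_norm_equivFun_sub_le {φ : E → F} (hφ : Differentiable ℝ φ)
    (hdom : ∀ u, IsRowDominant d (LinearMap.toMatrix b c (fderiv ℝ φ u : E →ₗ[ℝ] F))) (u v : E) :
    d * ‖b.equivFun (u - v)‖ ≤ ‖c.equivFun (φ u - φ v)‖ := by
  cases isEmpty_or_nonempty ι with
  | inl _ => simp [Subsingleton.elim _ (0 : ι → ℝ)]
  | inr _ =>
    have : FiniteDimensional ℝ F := c.finiteDimensional_of_finite
    obtain ⟨i, hi⟩ := Finite.exists_max fun j => ‖b.equivFun (u - v) j‖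
    have hnorm : ‖b.equivFun (u - v)‖ = ‖b.equivFun (u - v) i‖ :=
      le_antisymm ((pi_norm_le_iff_of_nonneg (norm_nonneg _)).2 hi) (norm_le_pi_norm _ i)
    have hderiv (z : E) : HasFDerivAt (fun z => c.coord i (φ z))
        (LinearMap.toContinuousLinearMap (c.coord i) ∘L fderiv ℝ φ z) z :=
      (LinearMap.toContinuousLinearMap (c.coord i)).hasFDerivAt.comp z (hφ z).hasFDerivAt
    obtain ⟨z, -, hz⟩ := domain_mvt (fun z _ => (hderiv z).hasFDerivWithinAt) convex_univ
      (Set.mem_univ v) (Set.mem_univ u)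
    have hrow : c.equivFun (φ u - φ v) i =
        LinearMap.toMatrix b c (fderiv ℝ φ z : E →ₗ[ℝ] F) i ⬝ᵥ b.equivFun (u - v) :=
      calc c.equivFun (φ u - φ v) i = c.repr (fderiv ℝ φ z (u - v)) i := by simpa using hz
        _ = _ := congrFun (LinearMap.toMatrix_mulVec_repr b c _ (u - v)).symm i
    calc d * ‖b.equivFun (u - v)‖ = d * ‖b.equivFun (u - v) i‖ := by rw [hnorm]
      _ ≤ ‖c.equivFun (φ u - φ v) i‖ := hrow ▸ mul_norm_apply_le_norm_dotProduct (hdom z i) hi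
      _ ≤ ‖c.equivFun (φ u - φ v)‖ := norm_le_pi_norm _ i

theorem exists_antilipschitzWith (hd : 0 < d) :
    ∃ K, ∀ φ : E → F, Differentiable ℝ φ →
      (∀ u, IsRowDominant d (LinearMap.toMatrix b c (fderiv ℝ φ u : E →ₗ[ℝ] F))) →
      AntilipschitzWith K φ := by
  have : FiniteDimensional ℝ F := c.finiteDimensional_of_finite
  set B := (b.equivFunL.symm : (ι → ℝ) →L[ℝ] E)
  set C := (c.equivFunL : F →L[ℝ] ι → ℝ)
  refine ⟨Real.toNNReal (‖B‖ * (‖C‖ / d)), fun φ hφ hdom =>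
    AntilipschitzWith.of_le_mul_dist fun u v => ?_⟩
  rw [dist_eq_norm, dist_eq_norm, Real.coe_toNNReal _ (by positivity)]
  have hcoord : ‖b.equivFun (u - v)‖ ≤ ‖C‖ * ‖φ u - φ v‖ / d :=
    (le_div_iff₀' hd).2 ((mul_norm_equivFun_sub_le b c hφ hdom u v).trans (C.le_opNorm _))
  calc ‖u - v‖ = ‖B (b.equivFun (u - v))‖ := by
        rw [show B (b.equivFun (u - v)) = u - v from b.equivFun.symm_apply_apply _]
    _ ≤ ‖B‖ * ‖b.equivFun (u - v)‖ := B.le_opNorm _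
    _ ≤ ‖B‖ * (‖C‖ * ‖φ u - φ v‖ / d) := by gcongr
    _ = ‖B‖ * (‖C‖ / d) * ‖φ u - φ v‖ := by ring

end IsRowDominant

end RowDominance

theorem stmt_15_general {X E F ι : Type*} [NormedAddCommGroup X] [NormedSpace ℝ X] [CompleteSpace X]
    [NormedAddCommGroup E] [NormedSpace ℝ E] [NormedAddCommGroup F] [NormedSpace ℝ F]
    [Fintype ι] [DecidableEq ι] (b : Basis ι ℝ E) (c : Basis ι ℝ F) (f : X × E → F)
    (hcont : ∀ u, Continuous fun x => f (x, u)) (hdiff : ∀ x, ContDiff ℝ 1 fun u => f (x, u))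
    {d : ℝ} (hd : 0 < d)
    (hdom : ∀ x u, IsRowDominant d
      (LinearMap.toMatrix b c (fderiv ℝ (fun u => f (x, u)) u : E →ₗ[ℝ] F))) :
    ∃ g : X → E, (∀ x, f (x, g x) = 0) ∧ Continuous g ∧
      (∀ k : WithTop ℕ∞, k ≠ 0 → ContDiff ℝ k f → ContDiff ℝ k g) ∧
      ∀ g' : X → E, (∀ x, f (x, g' x) = 0) → g' = g := by
  have : FiniteDimensional ℝ E := b.finiteDimensional_of_finite
  have : FiniteDimensional ℝ F := c.finiteDimensional_of_finite
  have : CompleteSpace E := FiniteDimensional.complete ℝ E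
  have : CompleteSpace F := FiniteDimensional.complete ℝ F
  obtain ⟨K, hK⟩ := IsRowDominant.exists_antilipschitzWith b c hd
  have hanti x : AntilipschitzWith K fun u => f (x, u) :=
    hK _ ((hdiff x).differentiable one_ne_zero) (hdom x)
  have hinv x u : (fderiv ℝ (fun u => f (x, u)) u).IsInvertible := (hdom x u).isInvertible hd
  have hbij x : Bijective fun u => f (x, u) :=
    bijective_of_antilipschitzWith_of_isInvertible_fderiv (hanti x) (hdiff x) (hinv x)
  choose g hg using fun x => (hbij x).surjective 0
  exact ⟨g, hg, continuous_of_apply_eq_of_antilipschitzWith hcont hanti hg,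
    fun k hk hf => contDiff_of_apply_eq_of_isInvertible_fderiv hk hf (fun x => (hbij x).injective)
      (fun x => hinv x (g x)) hg,
    fun g' hg' => funext fun x => (hbij x).injective ((hg' x).trans (hg x).symm)⟩

/-- global implicit function theorem under uniform strict row
diagonal dominance of the Jacobian in the `u`-variables. -/
theorem stmt_15 (n m : ℕ) (hn : 1 ≤ n) (hm : 1 ≤ m)
    (f : EuclideanSpace ℝ (Fin n) × EuclideanSpace ℝ (Fin m) → EuclideanSpace ℝ (Fin m))
    (hcont : Continuous f)
    (hdiff : ∀ x : EuclideanSpace ℝ (Fin n), ContDiff ℝ 1 (fun u => f (x, u)))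
    (d : ℝ) (hd : 0 < d)
    (hdom : ∀ (x : EuclideanSpace ℝ (Fin n)) (u : EuclideanSpace ℝ (Fin m)) (i : Fin m),
      d ≤ |fderiv ℝ (fun u => f (x, u)) u (EuclideanSpace.single i 1) i| -
        ∑ j ∈ Finset.univ.erase i,
          |fderiv ℝ (fun u => f (x, u)) u (EuclideanSpace.single j 1) i|) :
    ∃ g : EuclideanSpace ℝ (Fin n) → EuclideanSpace ℝ (Fin m),
      (∀ x, f (x, g x) = 0) ∧
      Continuous g ∧
      (ContDiff ℝ 1 f → ContDiff ℝ 1 g) ∧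
      ∀ g' : EuclideanSpace ℝ (Fin n) → EuclideanSpace ℝ (Fin m),
        (∀ x, f (x, g' x) = 0) → g' = g := by
  let b := (EuclideanSpace.basisFun (Fin m) ℝ).toBasis
  obtain ⟨g, hg, hgc, hgd, huniq⟩ := stmt_15_general b b f (fun u => by fun_prop) hdiff hd
    fun x u i => by simpa [b, LinearMap.toMatrix_apply] using hdom x u i
  exact ⟨g, hg, hgc, hgd 1 one_ne_zero, huniq⟩
end
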